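/- Let R be a 3-dimensional regular local ring with m = (x, y, z), and I the ideal of maximal minors of ((x, y, z), (y, z, x²)). Then the ε-multiplicity ε(I) := lim_{n→∞} (3!/n³)·length_R(I^{(n)}/Iⁿ) exists and equals 1/2. -/

import Mathlib

open IsLocalRing Filter

/-- The `n`-th symbolic power `I⁽ⁿ⁾ = ⋂_{p ∈ Min(R/I)} (IⁿR_p ∩ R)`. -/
noncomputable def symbolicPower {R : Type*} [CommRing R] (I : Ideal R) (n : ℕ) : Ideal R :=
  ⨅ p : I.minimalPrimes,
    haveI : Ideal.IsPrime (p : Ideal R) := p.2.1.1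
    Ideal.comap (algebraMap R (Localization.AtPrime (p : Ideal R)))
      (Ideal.map (algebraMap R (Localization.AtPrime (p : Ideal R))) (I ^ n))

/-- `M` has (finite) length `n` over `R`: there is a composition series from
`⊥` to `⊤` of length `n`. -/
def HasLength (R M : Type*) [CommRing R] [AddCommGroup M] [Module R M] (n : ℕ) : Prop :=
  ∃ s : CompositionSeries (Submodule R M), s.head = ⊥ ∧ s.last = ⊤ ∧ s.length = n

/-!
Let `g₁, g₂, g₃` be the three minors. The element `Δ = (g₂² - g₁g₃) / x` satisfies `𝔪 Δ ⊆ I²`, so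
all the ideals `Δⁱ Iⁿ⁻²ⁱ` lie in `I⁽ⁿ⁾`, and in fact `I⁽ⁿ⁾ = Iⁿ + Δ Iⁿ⁻² + Δ² Iⁿ⁻⁴ + ⋯`. Indeed
`I⁽ⁿ⁾` is the saturation of `Iⁿ` with respect to `x`, and the right-hand side admits division by
`x`: it is built recursively as `H + g₃ I⁽ⁿ⁻¹⁾`, where `H` is `(Δᵏ)` or `Δᵏ (g₁, g₂)` according to
the parity of `n`, and division by `x` is checked one step at a time.

The successive quotients of the partial sums of `Iⁿ + Δ Iⁿ⁻² + ⋯` are vector spaces over the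
residue field, spanned by the products of `Δⁱ` with the monomials of degree `n - 2i` in the `g`'s.
These are linearly independent: the associated graded ring of `R` is a polynomial ring, in which
the leading forms `Z²`, `-YZ`, `Y² - XZ` of the `g`'s satisfy no homogeneous relation, as they
define a Cremona transformation of the plane. Hence the length of `I⁽ⁿ⁾ / Iⁿ` is the sum of
`(n - 2i + 2).choose 2` over `1 ≤ i ≤ n / 2`, which grows like `n³ / 12`.
-/

section QuasiRegular

variable {R ι : Type*} [CommRing R]

theorem isSMulRegular_quotient_span_pow_sup {J : Ideal R} {e q : R}
    (he : IsSMulRegular (R ⧸ Ideal.span {q} ⊔ J) e) (hq : IsSMulRegular (R ⧸ J) q) (k : ℕ) :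
    IsSMulRegular (R ⧸ Ideal.span {q ^ k} ⊔ J) e := by
  refine (isSMulRegular_quotient_iff_mem_of_smul_mem _ _).2 fun u hu ↦ ?_
  induction k generalizing u with
  | zero => simp
  | succ k ih =>
    obtain ⟨s, j, hj, hs⟩ := Ideal.mem_span_singleton_sup.1 hu
    have hu' : e • u ∈ Ideal.span {q} ⊔ J :=
      Ideal.mem_span_singleton_sup.2 ⟨s * q ^ k, j, hj, by rw [← hs]; ring⟩
    obtain ⟨w, t, ht, rfl⟩ :=
      Ideal.mem_span_singleton_sup.1 (mem_of_isSMulRegular_quotient_of_smul_mem he hu')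
    rw [smul_eq_mul] at hs
    have hqw : q • (e * w - s * q ^ k) ∈ J := by
      have : q • (e * w - s * q ^ k) = j - e * t := by
        rw [smul_eq_mul]; linear_combination -hs
      exact this ▸ sub_mem hj (J.mul_mem_left _ ht)
    have hew : e • w ∈ Ideal.span {q ^ k} ⊔ J := Ideal.mem_span_singleton_sup.2
      ⟨s, _, mem_of_isSMulRegular_quotient_of_smul_mem hq hqw, by rw [smul_eq_mul]; ring⟩
    obtain ⟨c, b, hb, hw⟩ := Ideal.mem_span_singleton_sup.1 (ih w hew)
    exact Ideal.mem_span_singleton_sup.2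
      ⟨c, b * q + t, add_mem (J.mul_mem_right _ hb) ht, by rw [← hw]; ring⟩

theorem mem_span_singleton_sup_of_pow_mul_mem {J : Ideal R} {q u : R}
    (hq : IsSMulRegular (R ⧸ J) q) {k : ℕ} (hu : q ^ k * u ∈ Ideal.span {q ^ (k + 1)} ⊔ J) :
    u ∈ Ideal.span {q} ⊔ J := by
  obtain ⟨c, b, hb, hc⟩ := Ideal.mem_span_singleton_sup.1 hu
  have : q ^ k • (u - c * q) ∈ J := by
    have : q ^ k • (u - c * q) = b := by rw [smul_eq_mul]; linear_combination -hc
    exact this ▸ hb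
  exact Ideal.mem_span_singleton_sup.2
    ⟨c, _, mem_of_isSMulRegular_quotient_of_smul_mem (hq.pow k) this, by ring⟩

/-- A family every member of which is a nonzerodivisor modulo any finite set of other members, so
that any finite part of it, in any order, is a weakly regular sequence. -/
def IsPermutableRegular (f : ι → R) : Prop :=
  ∀ (s : Finset ι) (i : ι), i ∉ s → IsSMulRegular (R ⧸ Ideal.span (f '' s)) (f i)

namespace IsPermutableRegular

variable {f : ι → R}

theorem isSMulRegular (hf : IsPermutableRegular f) (i : ι) : IsSMulRegular R (f i) := by
  have hbot := hf ∅ i (Finset.notMem_empty i)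
  rw [Finset.coe_empty, Set.image_empty, Ideal.span_empty] at hbot
  refine isSMulRegular_iff_right_eq_zero_of_smul.2 fun r hr ↦ ?_
  rw [← Ideal.mem_bot] at hr ⊢
  exact mem_of_isSMulRegular_quotient_of_smul_mem hbot hr

theorem isSMulRegular_quotient_span_pow (hf : IsPermutableRegular f) (a : ι → ℕ) {s t : Finset ι}
    (hst : Disjoint s t) {i : ι} (hs : i ∉ s) (ht : i ∉ t) :
    IsSMulRegular (R ⧸ Ideal.span ((fun j ↦ f j ^ a j) '' s) ⊔ Ideal.span (f '' t)) (f i) := by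
  classical
  induction s using Finset.induction_on generalizing t i with
  | empty =>
    rw [Finset.coe_empty, Set.image_empty, Ideal.span_empty, bot_sup_eq]
    exact hf t i ht
  | insert j s hj ih =>
    rw [Finset.disjoint_insert_left] at hst
    rw [Finset.coe_insert, Set.image_insert_eq, Ideal.span_insert, sup_assoc]
    refine isSMulRegular_quotient_span_pow_sup ?_ (ih hst.2 hj hst.1) (a j)
    have := ih (t := insert j t) (i := i) (by simp [hj, hst.2])
      (fun h ↦ hs (Finset.mem_insert_of_mem h)) (by grind)
    rwa [Finset.coe_insert, Set.image_insert_eq, Ideal.span_insert, sup_left_comm] at this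

theorem mem_span_of_prod_pow_mul_mem [DecidableEq ι] (hf : IsPermutableRegular f) (a : ι → ℕ)
    {s t : Finset ι} (hst : Disjoint s t) {u : R}
    (hu : (∏ j ∈ s, f j ^ a j) * u ∈
      Ideal.span ((fun j ↦ f j ^ (a j + 1)) '' s) ⊔ Ideal.span (f '' t)) :
    u ∈ Ideal.span (f '' (s ∪ t : Finset ι)) := by
  induction s using Finset.induction_on generalizing t with
  | empty => simpa using hu
  | insert j s hj ih =>
    rw [Finset.disjoint_insert_left] at hst
    rw [Finset.prod_insert hj, mul_assoc, Finset.coe_insert, Set.image_insert_eq,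
      Ideal.span_insert, sup_assoc] at hu
    have := mem_span_singleton_sup_of_pow_mul_mem
      (hf.isSMulRegular_quotient_span_pow (fun j ↦ a j + 1) hst.2 hj hst.1) hu
    rw [sup_left_comm, ← Ideal.span_insert, ← Set.image_insert_eq, ← Finset.coe_insert] at this
    simpa [Finset.insert_union, Finset.union_insert] using ih (by simp [hj, hst.2]) this

theorem coeff_mem_span_of_eval_eq_zero [Finite ι] (hf : IsPermutableRegular f)
    {F : MvPolynomial ι R} (hF : F.eval f = 0) {a : ι →₀ ℕ}
    (ha : ∀ b ∈ F.support, b ≤ a → b = a) : F.coeff a ∈ Ideal.span (Set.range f) := by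
  classical
  cases nonempty_fintype ι
  have hmem : (∏ i, f i ^ a i) * F.coeff a ∈ Ideal.span (Set.range fun i ↦ f i ^ (a i + 1)) := by
    by_cases haF : a ∈ F.support
    · rw [MvPolynomial.eval_eq', ← Finset.add_sum_erase _ _ haF, add_eq_zero_iff_eq_neg] at hF
      rw [mul_comm, hF]
      refine neg_mem (Ideal.sum_mem _ fun b hb ↦ Ideal.mul_mem_left _ _ ?_)
      obtain ⟨hba, hb⟩ := Finset.mem_erase.1 hb
      obtain ⟨i, hi⟩ : ∃ i, a i < b i := by simpa [Finsupp.le_def] using mt (ha b hb) hba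
      exact Ideal.mem_of_dvd _ ((pow_dvd_pow _ hi).trans
        (Finset.dvd_prod_of_mem (fun i ↦ f i ^ b i) (Finset.mem_univ i)))
        (Ideal.subset_span ⟨i, rfl⟩)
    · simp [MvPolynomial.notMem_support_iff.1 haF]
  simpa using hf.mem_span_of_prod_pow_mul_mem a (s := .univ) (t := ∅) (u := F.coeff a) (by simp)
    (by simpa using hmem)

theorem coeff_mem_span_of_eval_mem_pow [Finite ι] (hf : IsPermutableRegular f)
    {F : MvPolynomial ι R} {N : ℕ} (hF : F.IsHomogeneous N)
    (hmem : F.eval f ∈ Ideal.span (Set.range f) ^ (N + 1)) (a : ι →₀ ℕ) :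
    F.coeff a ∈ Ideal.span (Set.range f) := by
  obtain ⟨G, hG, hGF⟩ := (Ideal.mem_span_pow_iff_exists_isHomogeneous f _).1 hmem
  by_cases haF : F.coeff a = 0
  · simp [haF]
  have hdeg : a.degree = N := by_contra fun h ↦ haF (hF.coeff_eq_zero h)
  have haG : G.coeff a = 0 := hG.coeff_eq_zero (by omega)
  have hmin : ∀ b ∈ (F - G).support, b ≤ a → b = a := by
    intro b hb hba
    have hsum : b.degree + (a - b).degree = N := by
      rw [← map_add, add_tsub_cancel_of_le hba, hdeg]
    have hbG : G.coeff b = 0 := hG.coeff_eq_zero (by omega)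
    have hbN : b.degree = N := by_contra fun h ↦
      MvPolynomial.mem_support_iff.1 hb (by simp [hF.coeff_eq_zero h, hbG])
    have hab : a - b = 0 := (Finsupp.degree_eq_zero_iff _).1 (by omega)
    exact hba.antisymm (tsub_eq_zero_iff_le.1 hab)
  simpa [haG] using hf.coeff_mem_span_of_eval_eq_zero (by simp [hGF]) hmin

end IsPermutableRegular

end QuasiRegular

section RegularLocalRing

variable {R : Type*} [CommRing R]

theorem isDomain_of_isPrime_span_singleton [IsNoetherianRing R] {w : R}
    (hw : (Ideal.span {w}).IsPrime) (hjac : w ∈ Ring.jacobson R)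
    (hmin : ∀ p ∈ minimalPrimes R, w ∉ p) : IsDomain R := by
  obtain ⟨p, hp, hpw⟩ := Ideal.exists_minimalPrimes_le (I := ⊥) (J := Ideal.span {w}) bot_le
  have hprime : p.IsPrime := hp.1.1
  have hle : p ≤ Ideal.span {w} • p := fun t ht ↦ by
    obtain ⟨q, rfl⟩ := Ideal.mem_span_singleton'.1 (hpw ht)
    rw [smul_eq_mul, mul_comm q]
    exact Ideal.mul_mem_mul (Ideal.mem_span_singleton_self w)
      ((hprime.mem_or_mem ht).resolve_right (hmin p hp))
  have hbot : p = ⊥ := Submodule.eq_bot_of_le_smul_of_le_jacobson_bot _ _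
    (IsNoetherian.noetherian _) hle
    (by rwa [Ideal.span_singleton_le_iff_mem, Ideal.jacobson_bot])
  exact IsDomain.of_bot_isPrime R (hbp := hbot ▸ hprime)

theorem exists_span_insert_erase_eq_maximalIdeal [IsLocalRing R] [DecidableEq R] {s : Finset R}
    (hs : Ideal.span (s : Set R) = maximalIdeal R) {w : R} (hw : w ∈ maximalIdeal R)
    (hw2 : w ∉ maximalIdeal R ^ 2) :
    ∃ a ∈ s, Ideal.span (({w} ∪ s.erase a : Finset R) : Set R) = maximalIdeal R := by
  obtain ⟨c, -, hc⟩ := Submodule.mem_span_finset.1 (hs ▸ hw)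
  obtain ⟨a, ha, hca⟩ : ∃ a ∈ s, IsUnit (c a) := by
    by_contra! hcon
    refine hw2 (hc ▸ pow_two (maximalIdeal R) ▸ Ideal.sum_mem _ fun a ha ↦ ?_)
    exact Ideal.mul_mem_mul ((mem_maximalIdeal _).2 (hcon a ha)) (hs ▸ Ideal.subset_span ha)
  refine ⟨a, ha, le_antisymm (Ideal.span_le.2 ?_) (hs ▸ Ideal.span_le.2 ?_)⟩
  · intro b hb
    rcases Finset.mem_union.1 hb with hb | hb
    · rwa [Finset.mem_singleton.1 hb]
    · exact hs ▸ Ideal.subset_span (Finset.mem_of_mem_erase hb)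
  · have hmem : ∀ b ∈ ({w} ∪ s.erase a : Finset R),
        b ∈ Ideal.span (({w} ∪ s.erase a : Finset R) : Set R) :=
      fun b hb ↦ Ideal.subset_span hb
    intro b hb
    by_cases hba : b = a
    · rw [← Finset.add_sum_erase _ _ ha, ← eq_sub_iff_add_eq] at hc
      rw [hba, SetLike.mem_coe, ← Ideal.unit_mul_mem_iff_mem _ hca, ← smul_eq_mul, hc]
      exact sub_mem (hmem w (by simp))
        (Ideal.sum_mem _ fun b hb ↦ Ideal.mul_mem_left _ _ (hmem b (by simp_all)))
    · exact hmem b (by simp_all)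

theorem exists_mem_maximalIdeal_notMem_sq [IsNoetherianRing R] [IsLocalRing R]
    (hdim : 0 < ringKrullDim R) :
    ∃ w ∈ maximalIdeal R, w ∉ maximalIdeal R ^ 2 ∧ ∀ p ∈ minimalPrimes R, w ∉ p := by
  have hmin : ∀ p ∈ minimalPrimes R, ¬ maximalIdeal R ≤ p := by
    intro p hp hle
    have := hp.1.1
    have hpm : p = maximalIdeal R := (le_maximalIdeal this.ne_top).antisymm hle
    rw [← maximalIdeal_height_eq_ringKrullDim, ← hpm, Ideal.height_eq_zero_iff.2 hp] at hdim
    simp at hdim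
  have hsq : ¬ maximalIdeal R ≤ maximalIdeal R ^ 2 := by
    intro hle
    have hbot : maximalIdeal R = ⊥ := Submodule.eq_bot_of_le_smul_of_le_jacobson_bot
      (maximalIdeal R) _ (IsNoetherian.noetherian _) (by rwa [smul_eq_mul, ← pow_two])
      (maximalIdeal_le_jacobson _)
    obtain ⟨p, hp⟩ := Ideal.nonempty_minimalPrimes (bot_ne_top : (⊥ : Ideal R) ≠ ⊤)
    exact hmin p hp (hbot ▸ bot_le)
  by_contra! hcon
  have hcover : (maximalIdeal R : Set R) ⊆
      ⋃ p ∈ insert (maximalIdeal R ^ 2) (minimalPrimes R), (p : Set R) := fun w hw ↦ by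
    by_cases hw2 : w ∈ maximalIdeal R ^ 2
    · exact Set.mem_biUnion (Set.mem_insert _ _) hw2
    · obtain ⟨p, hp, hwp⟩ := hcon w hw hw2
      exact Set.mem_biUnion (Set.mem_insert_of_mem _ hp) hwp
  obtain ⟨p, rfl | hp, hle⟩ := (Ideal.subset_union_prime_finite (f := id)
    ((minimalPrimes.finite_of_isNoetherianRing R).insert _) (maximalIdeal R ^ 2)
    (maximalIdeal R ^ 2) (by
      rintro p (rfl | hp) hne _
      exacts [absurd rfl hne, hp.1.1])).1 hcover
  exacts [hsq hle, hmin p hp hle]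

theorem ringKrullDim_le_card [IsNoetherianRing R] [IsLocalRing R] {s : Finset R}
    (hs : Ideal.span (s : Set R) = maximalIdeal R) : ringKrullDim R ≤ s.card := by
  have hspan := Submodule.spanFinrank_span_le_ncard_of_finite (R := R) s.finite_toSet
  rw [Set.ncard_coe_finset, ← Ideal.span, hs] at hspan
  exact (ringKrullDim_le_spanFinrank_maximalIdeal R).trans (by exact_mod_cast hspan)

theorem isRegularLocalRing_quotient_span [IsNoetherianRing R] [IsLocalRing R] [DecidableEq R]
    {s t : Finset R} (hst : Ideal.span ((s ∪ t : Finset R) : Set R) = maximalIdeal R)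
    (hdim : ((t.card + s.card : ℕ) : WithBot ℕ∞) ≤ ringKrullDim R) :
    IsRegularLocalRing (R ⧸ Ideal.span (s : Set R)) ∧
      ringKrullDim (R ⧸ Ideal.span (s : Set R)) = t.card := by
  set J := Ideal.span (s : Set R)
  have hs : J ≤ maximalIdeal R := hst ▸ Ideal.span_mono (by simp)
  have : Nontrivial (R ⧸ J) :=
    Ideal.Quotient.nontrivial_iff.2 (ne_top_of_le_ne_top Ideal.IsPrime.ne_top' hs)
  have hlocal : IsLocalRing (R ⧸ J) :=
    .of_surjective' (Ideal.Quotient.mk J) Ideal.Quotient.mk_surjective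
  have hmax : Ideal.span (Ideal.Quotient.mk J '' t) = maximalIdeal (R ⧸ J) := by
    rw [← IsLocalRing.map_maximalIdeal_of_surjective (Ideal.Quotient.mk J)
      Ideal.Quotient.mk_surjective, ← hst, Finset.coe_union, Ideal.span_union, Ideal.map_sup,
      Ideal.map_quotient_self, bot_sup_eq, Ideal.map_span]
  have hle : (t.card : WithBot ℕ∞) ≤ ringKrullDim (R ⧸ J) := by
    have h := hdim.trans (ringKrullDim_le_ringKrullDim_quotient_add_card s
      (by rw [ringJacobson_eq_maximalIdeal]; exact Ideal.span_le.1 hs))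
    rw [Nat.cast_add] at h
    exact ENat.WithBot.add_le_add_natCast_right_iff.1 h
  have hge : (maximalIdeal (R ⧸ J)).spanFinrank ≤ t.card := by
    rw [← hmax]
    refine (Submodule.spanFinrank_span_le_ncard_of_finite (t.finite_toSet.image _)).trans ?_
    simpa using Set.ncard_image_le (f := Ideal.Quotient.mk J) t.finite_toSet
  have hge' : ((maximalIdeal (R ⧸ J)).spanFinrank : WithBot ℕ∞) ≤ t.card := by exact_mod_cast hge
  exact ⟨.of_spanFinrank_maximalIdeal_le _ (hge'.trans hle),
    ((ringKrullDim_le_spanFinrank_maximalIdeal _).trans hge').antisymm hle⟩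

theorem isDomain_of_isRegularLocalRing [h : IsRegularLocalRing R] : IsDomain R := by
  classical
  induction hn : (maximalIdeal R).spanFinrank generalizing R with
  | zero =>
    rw [Submodule.spanFinrank_eq_zero_iff_eq_bot (IsNoetherian.noetherian _)] at hn
    exact (isField_iff_maximalIdeal_eq.2 hn).isDomain
  | succ n ih =>
    have hdim : ringKrullDim R = (n + 1 : ℕ) := by rw [← h.spanFinrank_maximalIdeal, hn]
    obtain ⟨w, hw, hw2, hwmin⟩ := exists_mem_maximalIdeal_notMem_sq (R := R)
      (by rw [hdim]; exact_mod_cast n.succ_pos)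
    obtain ⟨s, hs, hspan⟩ := Submodule.FG.exists_span_finset_card_eq_spanFinrank
      (IsNoetherian.noetherian (maximalIdeal R))
    obtain ⟨a, ha, hwa⟩ := exists_span_insert_erase_eq_maximalIdeal hspan hw hw2
    have hcard : (s.erase a).card = n := by rw [Finset.card_erase_of_mem ha, hs, hn]; simp
    obtain ⟨hreg, hdim'⟩ := isRegularLocalRing_quotient_span hwa (by rw [hcard, hdim]; simp)
    have hrank : (maximalIdeal (R ⧸ Ideal.span (({w} : Finset R) : Set R))).spanFinrank = n := by
      have := hreg.spanFinrank_maximalIdeal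
      rw [hdim', hcard] at this
      exact_mod_cast this
    have hdom := ih hrank
    rw [Finset.coe_singleton, Ideal.Quotient.isDomain_iff_prime] at hdom
    exact isDomain_of_isPrime_span_singleton hdom (by rwa [ringJacobson_eq_maximalIdeal]) hwmin

theorem isSMulRegular_quotient_of_notMem {P : Ideal R} [P.IsPrime] {r : R} (hr : r ∉ P) :
    IsSMulRegular (R ⧸ P) r :=
  (isSMulRegular_quotient_iff_mem_of_smul_mem _ _).2 fun _ h ↦
    (Ideal.IsPrime.mem_or_mem ‹_› h).resolve_left hr

theorem notMem_span_image_of_card_le_ringKrullDim [IsNoetherianRing R] [IsLocalRing R] {ι : Type*}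
    [Fintype ι] {f : ι → R} (hf : Ideal.span (Set.range f) = maximalIdeal R)
    (hdim : (Fintype.card ι : WithBot ℕ∞) ≤ ringKrullDim R) {s : Finset ι} {i : ι} (hi : i ∉ s) :
    f i ∉ Ideal.span (f '' s) := by
  classical
  intro hmem
  have hspan : Ideal.span (((Finset.univ.erase i).image f : Finset R) : Set R) =
      maximalIdeal R := by
    rw [← hf]
    refine (Ideal.span_mono (by simp)).antisymm (Ideal.span_le.2 ?_)
    rintro _ ⟨j, rfl⟩
    by_cases hji : j = i
    · rw [hji]
      refine Ideal.span_mono ?_ hmem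
      rw [Finset.coe_image]
      exact Set.image_mono fun k hk ↦ by simpa using ne_of_mem_of_not_mem hk hi
    · exact Ideal.subset_span (by simpa using ⟨j, hji, rfl⟩)
  have hcard : ((Finset.univ.erase i).image f).card < Fintype.card ι :=
    Finset.card_image_le.trans_lt (Finset.card_lt_univ_of_notMem (Finset.notMem_erase i _))
  exact hcard.not_ge (by exact_mod_cast hdim.trans (ringKrullDim_le_card hspan))

theorem isPermutableRegular_of_span_eq_maximalIdeal [IsNoetherianRing R] [IsLocalRing R]
    {ι : Type*} [Fintype ι] {f : ι → R} (hf : Ideal.span (Set.range f) = maximalIdeal R)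
    (hdim : (Fintype.card ι : WithBot ℕ∞) ≤ ringKrullDim R) : IsPermutableRegular f := by
  classical
  intro s i hi
  have hcompl : (s.image f ∪ sᶜ.image f : Finset R) = Set.range f := by
    simp [← Set.image_union]
  have hcard : (sᶜ.image f).card + (s.image f).card ≤ Fintype.card ι :=
    (add_le_add Finset.card_image_le Finset.card_image_le).trans_eq s.card_compl_add_card
  obtain ⟨hreg, -⟩ := isRegularLocalRing_quotient_span (R := R) (s := s.image f)
    (t := sᶜ.image f) (hcompl ▸ hf) (le_trans (by exact_mod_cast hcard) hdim)
  have hprime : (Ideal.span (f '' s)).IsPrime := by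
    rw [← Ideal.Quotient.isDomain_iff_prime, ← Finset.coe_image]
    exact isDomain_of_isRegularLocalRing
  exact isSMulRegular_quotient_of_notMem (notMem_span_image_of_card_le_ringKrullDim hf hdim hi)

end RegularLocalRing

section LeadingForm

open MvPolynomial (aeval bind₁ map eval)
variable {R : Type*} [CommRing R]

theorem mul_sub_mul_mem_pow {I : Ideal R} {p q : ℕ} {a a' b b' : R} (ha : a - a' ∈ I ^ (p + 1))
    (ha' : a' ∈ I ^ p) (hb : b - b' ∈ I ^ (q + 1)) (hb' : b' ∈ I ^ q) :
    a * b - a' * b' ∈ I ^ (p + q + 1) := by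
  have hbq : b ∈ I ^ q := by
    rw [← sub_add_cancel b b']
    exact add_mem (Ideal.pow_le_pow_right q.le_succ hb) hb'
  rw [show a * b - a' * b' = (a - a') * b + a' * (b - b') by ring]
  refine add_mem ?_ ?_
  · rw [add_right_comm, pow_add]
    exact Ideal.mul_mem_mul ha hbq
  · rw [add_assoc, pow_add]
    exact Ideal.mul_mem_mul ha' hb

theorem prod_sub_prod_mem_pow {κ : Type*} {I : Ideal R} {a b : κ → R} {p : κ → ℕ} (s : Finset κ)
    (hab : ∀ i ∈ s, a i - b i ∈ I ^ (p i + 1)) (hb : ∀ i ∈ s, b i ∈ I ^ p i) :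
    ∏ i ∈ s, a i - ∏ i ∈ s, b i ∈ I ^ (∑ i ∈ s, p i + 1) := by
  classical
  induction s using Finset.induction_on with
  | empty => simp
  | insert j s hj ih =>
    rw [Finset.forall_mem_insert] at hab hb
    rw [Finset.prod_insert hj, Finset.prod_insert hj, Finset.sum_insert hj]
    refine mul_sub_mul_mem_pow hab.1 hb.1 (ih hab.2 hb.2) ?_
    exact Finset.prod_pow_eq_pow_sum s p I ▸ Ideal.prod_mem_prod hb.2

theorem pow_sub_pow_mem_pow {I : Ideal R} {p : ℕ} {a b : R} (hab : a - b ∈ I ^ (p + 1))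
    (hb : b ∈ I ^ p) (n : ℕ) : a ^ n - b ^ n ∈ I ^ (p * n + 1) := by
  simpa [mul_comm] using prod_sub_prod_mem_pow (p := fun _ ↦ p) (Finset.range n)
    (fun _ _ ↦ hab) (fun _ _ ↦ hb)

theorem eval_mem_span_pow {ι : Type*} (f : ι → R) {F : MvPolynomial ι R} {n : ℕ}
    (hF : F.IsHomogeneous n) : eval f F ∈ Ideal.span (Set.range f) ^ n :=
  (Ideal.mem_span_pow_iff_exists_isHomogeneous f _).2 ⟨F, hF, rfl⟩

theorem eval_sub_eval_mem_pow {κ : Type*} [Finite κ] {I : Ideal R} {p d : ℕ} {a b : κ → R}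
    (hab : ∀ i, a i - b i ∈ I ^ (p + 1)) (hb : ∀ i, b i ∈ I ^ p) {P : MvPolynomial κ R}
    (hP : P.IsHomogeneous d) : eval a P - eval b P ∈ I ^ (p * d + 1) := by
  cases nonempty_fintype κ
  rw [MvPolynomial.eval_eq', MvPolynomial.eval_eq', ← Finset.sum_sub_distrib]
  refine Ideal.sum_mem _ fun e he ↦ ?_
  have hdeg : ∑ i, p * e i = p * d := by
    rw [← Finset.mul_sum, ← Finsupp.degree_eq_sum]
    exact congrArg _ (by_contra fun h ↦ MvPolynomial.mem_support_iff.1 he (hP.coeff_eq_zero h))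
  rw [← mul_sub, ← hdeg]
  exact Ideal.mul_mem_left _ _ (prod_sub_prod_mem_pow _
    (fun i _ ↦ pow_sub_pow_mem_pow (hab i) (hb i) _)
    (fun i _ ↦ pow_mul I p _ ▸ Ideal.pow_mem_pow (hb i) _))

theorem aeval_smul_of_isHomogeneous {κ S : Type*} [CommRing S] [Algebra R S]
    (c : S) (g : κ → S) {P : MvPolynomial κ R} {d : ℕ} (hP : P.IsHomogeneous d) :
    aeval (c • g) P = c ^ d * aeval g P := by
  simp only [MvPolynomial.aeval_def, MvPolynomial.eval₂_eq, Finset.mul_sum]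
  refine Finset.sum_congr rfl fun e he ↦ ?_
  have hdeg : ∑ i ∈ e.support, e i = d :=
    by_contra fun h ↦ MvPolynomial.mem_support_iff.1 he (hP.coeff_eq_zero h)
  simp only [Pi.smul_apply, smul_eq_mul, mul_pow, Finset.prod_mul_distrib,
    Finset.prod_pow_eq_pow_sum, hdeg]
  ring

theorem IsPermutableRegular.coeff_mem_of_mul_eval_mem_pow {ι κ : Type*} [Finite ι] [Finite κ]
    {f : ι → R} (hf : IsPermutableRegular f) {I : Ideal R} [I.IsPrime]
    (hI : I = Ideal.span (Set.range f)) {p q d : ℕ} {E : MvPolynomial ι R}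
    (hE : E.IsHomogeneous q) (hE0 : map (Ideal.Quotient.mk I) E ≠ 0)
    {D : R} (hD : D - eval f E ∈ I ^ (q + 1))
    {G : κ → MvPolynomial ι R} (hG : ∀ k, (G k).IsHomogeneous p) {g : κ → R}
    (hg : ∀ k, g k - eval f (G k) ∈ I ^ (p + 1))
    (hind : ∀ Q : MvPolynomial κ (R ⧸ I), Q.IsHomogeneous d →
      bind₁ (fun k ↦ map (Ideal.Quotient.mk I) (G k)) Q = 0 → Q = 0)
    {P : MvPolynomial κ R} (hP : P.IsHomogeneous d) (h : D * eval g P ∈ I ^ (q + p * d + 1))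
    (a : κ →₀ ℕ) : P.coeff a ∈ I := by
  have heval : eval f (bind₁ G P) = eval (fun k ↦ eval f (G k)) P := by
    rw [MvPolynomial.eval, MvPolynomial.eval₂Hom_bind₁]
    rfl
  have hdiff : D * eval g P - eval f (E * bind₁ G P) ∈ I ^ (q + p * d + 1) := by
    have hmem (k) : eval f (G k) ∈ I ^ p := hI ▸ eval_mem_span_pow f (hG k)
    rw [map_mul, heval]
    refine mul_sub_mul_mem_pow hD (hI ▸ eval_mem_span_pow f hE)
      (eval_sub_eval_mem_pow hg hmem hP) ?_
    rw [← heval, hI]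
    exact eval_mem_span_pow f (hP.aeval G hG)
  have hhom : (E * bind₁ G P).IsHomogeneous (q + p * d) := hE.mul (hP.aeval G hG)
  have hzero : map (Ideal.Quotient.mk I) (E * bind₁ G P) = 0 := by
    ext b
    rw [MvPolynomial.coeff_map, MvPolynomial.coeff_zero, Ideal.Quotient.eq_zero_iff_mem, hI]
    refine hf.coeff_mem_span_of_eval_mem_pow hhom ?_ b
    rw [← hI]
    exact (Submodule.sub_mem_iff_right _ h).1 hdiff
  rw [map_mul, MvPolynomial.map_bind₁] at hzero
  have := hind _ (hP.map _) ((mul_eq_zero.1 hzero).resolve_left hE0)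
  rw [← Ideal.Quotient.eq_zero_iff_mem, ← MvPolynomial.coeff_map, this, MvPolynomial.coeff_zero]

end LeadingForm

section CurveLeadingForm

open MvPolynomial (X bind₁ map)
variable (R : Type*) [CommRing R]

/-- The leading forms, in `R[X₀, X₁, X₂] = R[X, Y, Z]`, of the generators `z² - x²y`, `x³ - yz`,
`y² - xz` of the ideal of the curve. -/
noncomputable def curveLeadingForm : Fin 3 → MvPolynomial (Fin 3) R :=
  ![X 2 ^ 2, -(X 1 * X 2), X 1 ^ 2 - X 0 * X 2]

theorem isHomogeneous_curveLeadingForm (k : Fin 3) : (curveLeadingForm R k).IsHomogeneous 2 := by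
  have hX := MvPolynomial.isHomogeneous_X R (σ := Fin 3)
  fin_cases k
  exacts [(hX 2).pow 2, ((hX 1).mul (hX 2)).neg, ((hX 1).pow 2).sub ((hX 0).mul (hX 2))]

theorem map_curveLeadingForm {S : Type*} [CommRing S] (φ : R →+* S) (k : Fin 3) :
    map φ (curveLeadingForm R k) = curveLeadingForm S k := by
  fin_cases k <;> simp [curveLeadingForm]

variable {R}

-- The three quadrics define a Cremona transformation of the plane; substituting its inverse
-- `Z = U²`, `Y = -UV`, `X = V² - UW` turns them into `U³ • (U, V, W)`.
theorem eq_zero_of_bind₁_curveLeadingForm_eq_zero [IsDomain R] {P : MvPolynomial (Fin 3) R} {d : ℕ}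
    (hP : P.IsHomogeneous d) (h : bind₁ (curveLeadingForm R) P = 0) : P = 0 := by
  let inverse : Fin 3 → MvPolynomial (Fin 3) R :=
    ![X 1 ^ 2 - X 0 * X 2, -(X 0 * X 1), X 0 ^ 2]
  have hsubst (k : Fin 3) : bind₁ inverse (curveLeadingForm R k) = X 0 ^ 3 * X k := by
    fin_cases k <;> simp [inverse, curveLeadingForm] <;> ring
  have hcremona := congrArg (bind₁ inverse) h
  rw [MvPolynomial.bind₁_bind₁, map_zero, funext hsubst] at hcremona
  have hscale := aeval_smul_of_isHomogeneous (X 0 ^ 3 : MvPolynomial (Fin 3) R) X hP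
  rw [MvPolynomial.aeval_X_left_apply] at hscale
  exact (mul_eq_zero.1 (hscale.symm.trans hcremona)).resolve_left
    (pow_ne_zero _ (pow_ne_zero _ (MvPolynomial.X_ne_zero 0)))

end CurveLeadingForm

section Length

variable {R : Type*} [CommRing R]

theorem length_quotient_maximalIdeal [IsLocalRing R] :
    Module.length R (R ⧸ maximalIdeal R) = 1 := by
  rw [Module.length_eq_one_iff, isSimpleModule_iff_isCoatom]
  exact Ideal.isMaximal_def.1 (maximalIdeal.isMaximal R)

theorem length_eq_card_of_span_eq_top [IsLocalRing R] {M κ : Type*} [AddCommGroup M] [Module R M]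
    [Fintype κ] {v : κ → M} (hspan : Submodule.span R (Set.range v) = ⊤)
    (hann : ∀ k, ∀ t ∈ maximalIdeal R, t • v k = 0)
    (hind : ∀ c : κ → R, ∑ k, c k • v k = 0 → ∀ k, c k ∈ maximalIdeal R) :
    Module.length R M = Fintype.card κ := by
  have hker : LinearMap.ker (Fintype.linearCombination R v) =
      Submodule.pi Set.univ fun _ ↦ maximalIdeal R := by
    ext c
    rw [LinearMap.mem_ker, Fintype.linearCombination_apply, Submodule.mem_pi]
    exact ⟨fun hc k _ ↦ hind c hc k,
      fun hc ↦ Finset.sum_eq_zero fun k _ ↦ hann k _ (hc k trivial)⟩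
  have hsurj : Function.Surjective (Fintype.linearCombination R v) := by
    rw [← LinearMap.range_eq_top, Fintype.range_linearCombination, hspan]
  classical
  rw [← ((Submodule.quotEquivOfEq _ _ hker.symm).trans
    ((Fintype.linearCombination R v).quotKerEquivOfSurjective hsurj)).length_eq,
    (Submodule.quotientPi _).length_eq, Module.length_pi]
  simp [length_quotient_maximalIdeal]

theorem length_quotient_comap_eq_card [IsLocalRing R] {κ : Type*} [Fintype κ] {A B : Ideal R}
    {w : κ → R} (hB : B = A ⊔ Ideal.span (Set.range w))
    (hann : ∀ k, ∀ t ∈ maximalIdeal R, t * w k ∈ A)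
    (hind : ∀ c : κ → R, ∑ k, c k * w k ∈ A → ∀ k, c k ∈ maximalIdeal R) :
    Module.length R (B ⧸ Submodule.comap B.subtype A) = Fintype.card κ := by
  have hwB (k : κ) : w k ∈ B := hB ▸ Ideal.mem_sup_right (Ideal.subset_span ⟨k, rfl⟩)
  let v (k : κ) : B ⧸ Submodule.comap B.subtype A := Submodule.Quotient.mk ⟨w k, hwB k⟩
  have hv (c : κ → R) : ∑ k, c k • v k =
      Submodule.Quotient.mk ⟨∑ k, c k * w k, B.sum_mem fun k _ ↦ B.mul_mem_left _ (hwB k)⟩ := by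
    simp only [v, ← Submodule.mkQ_apply, ← map_smul, ← map_sum]
    congr 1
    exact Subtype.ext (by simp)
  refine length_eq_card_of_span_eq_top (v := v) (eq_top_iff.2 fun b _ ↦ ?_)
    (fun k t ht ↦ (Submodule.Quotient.mk_eq_zero _).2 (hann k t ht)) (fun c hc ↦ hind c ?_)
  · obtain ⟨⟨b, hb⟩, rfl⟩ := Submodule.mkQ_surjective _ b
    obtain ⟨a, ha, b', hb', rfl⟩ := Submodule.mem_sup.1 (hB ▸ hb)
    obtain ⟨c, rfl⟩ := Ideal.mem_span_range_iff_exists_fun.1 hb'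
    rw [Submodule.mem_span_range_iff_exists_fun]
    refine ⟨c, ?_⟩
    rw [hv, Submodule.mkQ_apply, Submodule.Quotient.eq, Submodule.mem_comap]
    simpa using ha
  · rw [hv, Submodule.Quotient.mk_eq_zero] at hc
    exact hc

theorem length_quotient_comap_add {A B C : Ideal R} (hAB : A ≤ B) (hBC : B ≤ C) :
    Module.length R (C ⧸ Submodule.comap C.subtype A) =
      Module.length R (B ⧸ Submodule.comap B.subtype A) +
        Module.length R (C ⧸ Submodule.comap C.subtype B) := by
  let f : (B ⧸ Submodule.comap B.subtype A) →ₗ[R] C ⧸ Submodule.comap C.subtype A :=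
    Submodule.mapQ _ _ (Submodule.inclusion hBC) fun b hb ↦ hb
  let g : (C ⧸ Submodule.comap C.subtype A) →ₗ[R] C ⧸ Submodule.comap C.subtype B :=
    Submodule.factor (Submodule.comap_mono hAB)
  refine Module.length_eq_add_of_exact f g ?_ (Submodule.factor_surjective _) ?_
  · rw [← LinearMap.ker_eq_bot, LinearMap.ker_eq_bot']
    intro b hb
    obtain ⟨b, rfl⟩ := Submodule.mkQ_surjective _ b
    exact (Submodule.Quotient.mk_eq_zero _).2 ((Submodule.Quotient.mk_eq_zero _).1 hb :)
  · intro c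
    obtain ⟨c, rfl⟩ := Submodule.mkQ_surjective _ c
    constructor
    · intro hc
      have hc' : c ∈ Submodule.comap C.subtype B := (Submodule.Quotient.mk_eq_zero _).1 hc
      exact ⟨Submodule.mkQ _ ⟨c, hc'⟩, rfl⟩
    · rintro ⟨b, hb⟩
      obtain ⟨b, rfl⟩ := Submodule.mkQ_surjective _ b
      rw [← hb]
      exact (Submodule.Quotient.mk_eq_zero _).2 b.2

theorem span_range_pow_eq_span_range_prod {κ : Type*} [Fintype κ] [DecidableEq κ] (g : κ → R)
    (n : ℕ) : Ideal.span (Set.range g) ^ n =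
      Ideal.span (Set.range fun a : Finset.finsuppAntidiag (.univ : Finset κ) n ↦
        ∏ i, g i ^ a.1 i) := by
  refine le_antisymm (fun r hr ↦ ?_) (Ideal.span_le.2 ?_)
  · obtain ⟨P, hP, rfl⟩ := (Ideal.mem_span_pow_iff_exists_isHomogeneous g r).1 hr
    rw [MvPolynomial.eval_eq']
    refine Ideal.sum_mem _ fun a ha ↦ Ideal.mul_mem_left _ _ (Ideal.subset_span ⟨⟨a, ?_⟩, rfl⟩)
    rw [Finset.mem_finsuppAntidiag, ← Finsupp.degree_eq_sum]
    exact ⟨by_contra fun h ↦ MvPolynomial.mem_support_iff.1 ha (hP.coeff_eq_zero h),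
      Finset.subset_univ _⟩
  · rintro _ ⟨⟨a, ha⟩, rfl⟩
    have hdeg := (Finset.mem_finsuppAntidiag.1 ha).1
    subst hdeg
    rw [← Finset.prod_pow_eq_pow_sum]
    exact Ideal.prod_mem_prod fun i _ ↦
      Ideal.pow_mem_pow (Ideal.subset_span (Set.mem_range_self i)) _

theorem hasLength_of_length_eq {M : Type*} [AddCommGroup M] [Module R M] {n : ℕ}
    (h : Module.length R M = n) : HasLength R M n := by
  obtain ⟨s, hbot, htop⟩ := isFiniteLength_iff_exists_compositionSeries.1
    (Module.length_ne_top_iff.1 (h ▸ ENat.natCast_ne_top n))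
  have hs := Module.length_compositionSeries s hbot htop
  exact ⟨s, hbot, htop, by exact_mod_cast hs.trans h⟩

end Length

section DeltaFiltration

variable {R : Type*} [CommRing R] {I : Ideal R} {D : R} {n j : ℕ}

/-- The partial sum `Iⁿ + D Iⁿ⁻² + ⋯ + Dʲ Iⁿ⁻²ʲ` of the degree `n` part of the algebra generated
by `I` in degree one and `D` in degree two; it is meant for `2 * j ≤ n`, the subtraction being
truncated. -/
def deltaFiltration (I : Ideal R) (D : R) (n j : ℕ) : Ideal R :=
  (Finset.range (j + 1)).sup fun i ↦ Ideal.span {D ^ i} * I ^ (n - 2 * i)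

theorem deltaFiltration_zero : deltaFiltration I D n 0 = I ^ n := by
  simp [deltaFiltration]

theorem deltaFiltration_succ : deltaFiltration I D n (j + 1) =
    deltaFiltration I D n j ⊔ Ideal.span {D ^ (j + 1)} * I ^ (n - 2 * (j + 1)) := by
  rw [deltaFiltration, Finset.range_add_one, Finset.sup_insert, sup_comm, deltaFiltration]

theorem deltaFiltration_le_iff {J : Ideal R} : deltaFiltration I D n j ≤ J ↔
    ∀ i ≤ j, Ideal.span {D ^ i} * I ^ (n - 2 * i) ≤ J := by
  simp [deltaFiltration, Finset.sup_le_iff]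

theorem span_pow_mul_le_deltaFiltration {i : ℕ} (hi : i ≤ j) :
    Ideal.span {D ^ i} * I ^ (n - 2 * i) ≤ deltaFiltration I D n j :=
  deltaFiltration_le_iff.1 le_rfl i hi

theorem pow_le_deltaFiltration : I ^ n ≤ deltaFiltration I D n j := by
  simpa using span_pow_mul_le_deltaFiltration (I := I) (D := D) (n := n) j.zero_le

theorem deltaFiltration_mono : Monotone (deltaFiltration I D n) :=
  fun _ _ hjk ↦ deltaFiltration_le_iff.2 fun _ hi ↦ span_pow_mul_le_deltaFiltration (hi.trans hjk)

theorem mul_deltaFiltration_le (hj : 2 * j ≤ n) :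
    I * deltaFiltration I D n j ≤ deltaFiltration I D (n + 1) j := by
  refine Ideal.mul_le.2 fun g hg s hs ↦ ?_
  suffices h : deltaFiltration I D n j ≤ Submodule.colon (deltaFiltration I D (n + 1) j) {g} by
    simpa [Submodule.mem_colon_singleton, mul_comm g] using h hs
  refine deltaFiltration_le_iff.2 fun i hi r hr ↦ ?_
  rw [Submodule.mem_colon_singleton, smul_eq_mul]
  refine span_pow_mul_le_deltaFiltration hi ?_
  rw [show n + 1 - 2 * i = n - 2 * i + 1 by omega, pow_succ, ← mul_assoc]
  exact Ideal.mul_mem_mul hr hg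

end DeltaFiltration

section Curve

open MvPolynomial (X eval)
variable {R : Type*} [CommRing R] (x y z : R)

/-- The maximal minors of `((x, y, z), (y, z, x²))`, up to sign. -/
def curveMinor : Fin 3 → R :=
  ![z ^ 2 - x ^ 2 * y, x ^ 3 - y * z, y ^ 2 - x * z]

/-- The ideal of maximal minors of `((x, y, z), (y, z, x²))`. -/
abbrev curveIdeal : Ideal R :=
  Ideal.span {z ^ 2 - x ^ 2 * y, x ^ 3 - y * z, y ^ 2 - x * z}

/-- The element `Δ` with `xΔ = g₂² - g₁g₃`, where `g₁, g₂, g₃` are the three minors; it generates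
the second symbolic power of `curveIdeal x y z` together with the square. -/
def curveDelta : R :=
  z ^ 3 + x * y ^ 3 - 3 * x ^ 2 * y * z + x ^ 5

theorem span_range_vec_three : Ideal.span (Set.range ![x, y, z]) = Ideal.span {x, y, z} := by
  rw [Matrix.range_cons, Matrix.range_cons_cons_empty, Set.singleton_union]

theorem span_range_curveMinor : Ideal.span (Set.range (curveMinor x y z)) = curveIdeal x y z :=
  span_range_vec_three _ _ _

theorem curveMinor_mem_curveIdeal (k : Fin 3) : curveMinor x y z k ∈ curveIdeal x y z :=
  span_range_curveMinor x y z ▸ Ideal.subset_span ⟨k, rfl⟩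

theorem mul_curveDelta_mem {t : R} (ht : t ∈ Ideal.span {x, y, z}) :
    t * curveDelta x y z ∈ curveIdeal x y z ^ 2 := by
  have hg (k l : Fin 3) : curveMinor x y z k * curveMinor x y z l ∈ curveIdeal x y z ^ 2 :=
    pow_two (curveIdeal x y z) ▸
      Ideal.mul_mem_mul (curveMinor_mem_curveIdeal x y z k) (curveMinor_mem_curveIdeal x y z l)
  suffices h : Ideal.span {x, y, z} ≤
      Submodule.colon (curveIdeal x y z ^ 2) {curveDelta x y z} by
    simpa [Submodule.mem_colon_singleton] using h ht
  rw [Ideal.span_le]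
  rintro _ (rfl | rfl | rfl) <;> rw [SetLike.mem_coe, Submodule.mem_colon_singleton, smul_eq_mul]
  · convert! sub_mem (hg 1 1) (hg 0 2) using 1
    simp only [curveDelta, curveMinor, Matrix.cons_val]
    ring
  · convert! sub_mem (Ideal.mul_mem_left _ x (hg 2 2)) (hg 0 1) using 1
    simp only [curveDelta, curveMinor, Matrix.cons_val]
    ring
  · convert! sub_mem (hg 0 0) (Ideal.mul_mem_left _ x (hg 1 2)) using 1
    simp only [curveDelta, curveMinor, Matrix.cons_val]
    ring

variable {x y z}

theorem mul_mul_mem_span_pow {a b c : R} (ha : a ∈ Ideal.span {x, y, z})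
    (hb : b ∈ Ideal.span {x, y, z}) (hc : c ∈ Ideal.span {x, y, z}) :
    a * b * c ∈ Ideal.span {x, y, z} ^ 3 := by
  rw [pow_succ, pow_two]
  exact Ideal.mul_mem_mul (Ideal.mul_mem_mul ha hb) hc

theorem curveMinor_sub_mem (k : Fin 3) : curveMinor x y z k - eval ![x, y, z]
    (curveLeadingForm R k) ∈ Ideal.span {x, y, z} ^ 3 := by
  have hx : x ∈ Ideal.span {x, y, z} := Ideal.subset_span (by simp)
  have hy : y ∈ Ideal.span {x, y, z} := Ideal.subset_span (by simp)
  fin_cases k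
  · convert! neg_mem (mul_mul_mem_span_pow hx hx hy) using 1
    simp only [curveMinor, curveLeadingForm, Matrix.cons_val, Fin.zero_eta, map_pow,
      MvPolynomial.eval_X]
    ring
  · convert! mul_mul_mem_span_pow hx hx hx using 1
    simp only [curveMinor, curveLeadingForm, Matrix.cons_val, Fin.mk_one, map_neg, map_mul,
      MvPolynomial.eval_X]
    ring
  · simp [curveMinor, curveLeadingForm]

theorem curveDelta_sub_mem : curveDelta x y z - eval ![x, y, z] (X 2 ^ 3) ∈
    Ideal.span {x, y, z} ^ 4 := by
  have hx : x ∈ Ideal.span {x, y, z} := Ideal.subset_span (by simp)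
  have hy : y ∈ Ideal.span {x, y, z} := Ideal.subset_span (by simp)
  have hz : z ∈ Ideal.span {x, y, z} := Ideal.subset_span (by simp)
  convert! add_mem (sub_mem (Ideal.mul_mem_mul (mul_mul_mem_span_pow hx hy hy) hy)
    (Ideal.mul_mem_left _ 3 (Ideal.mul_mem_mul (mul_mul_mem_span_pow hx hx hy) hz)))
    (Ideal.mul_mem_left _ x (Ideal.mul_mem_mul (mul_mul_mem_span_pow hx hx hx) hx)) using 1
  simp only [curveDelta, Matrix.cons_val, map_pow, MvPolynomial.eval_X]
  ring

theorem eval_mem_span_triple_pow {F : MvPolynomial (Fin 3) R} {d : ℕ} (hF : F.IsHomogeneous d) :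
    eval ![x, y, z] F ∈ Ideal.span {x, y, z} ^ d :=
  span_range_vec_three x y z ▸ eval_mem_span_pow ![x, y, z] hF

theorem curveIdeal_le_sq : curveIdeal x y z ≤ Ideal.span {x, y, z} ^ 2 := by
  rw [← span_range_curveMinor, Ideal.span_le]
  rintro _ ⟨k, rfl⟩
  rw [SetLike.mem_coe, ← Submodule.sub_mem_iff_left _
    (eval_mem_span_triple_pow (isHomogeneous_curveLeadingForm R k))]
  exact Ideal.pow_le_pow_right (Nat.le_succ 2) (curveMinor_sub_mem k)

theorem curveDelta_mem_pow : curveDelta x y z ∈ Ideal.span {x, y, z} ^ 3 := by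
  rw [← Submodule.sub_mem_iff_left _
    (eval_mem_span_triple_pow ((MvPolynomial.isHomogeneous_X R 2).pow 3))]
  exact Ideal.pow_le_pow_right (Nat.le_succ 3) curveDelta_sub_mem

theorem deltaFiltration_le_pow {n j : ℕ} (hj : 2 * j ≤ n) :
    deltaFiltration (curveIdeal x y z) (curveDelta x y z) n j ≤
      Ideal.span {x, y, z} ^ (2 * n - j) := by
  refine deltaFiltration_le_iff.2 fun i hi ↦ ?_
  calc Ideal.span {curveDelta x y z ^ i} * curveIdeal x y z ^ (n - 2 * i)
      ≤ (Ideal.span {x, y, z} ^ 3) ^ i * (Ideal.span {x, y, z} ^ 2) ^ (n - 2 * i) :=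
        Ideal.mul_mono ((Ideal.span_singleton_le_iff_mem _).2
          (Ideal.pow_mem_pow curveDelta_mem_pow i)) (Ideal.pow_right_mono curveIdeal_le_sq _)
    _ = Ideal.span {x, y, z} ^ (3 * i + 2 * (n - 2 * i)) := by rw [← pow_mul, ← pow_mul, ← pow_add]
    _ ≤ Ideal.span {x, y, z} ^ (2 * n - j) := Ideal.pow_le_pow_right (by omega)

theorem coeff_mem_of_curveDelta_pow_mul_eval_mem (hf : IsPermutableRegular ![x, y, z])
    [(Ideal.span {x, y, z}).IsPrime] {P : MvPolynomial (Fin 3) R} {d e : ℕ}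
    (hP : P.IsHomogeneous d)
    (h : curveDelta x y z ^ e * eval (curveMinor x y z) P ∈
      Ideal.span {x, y, z} ^ (3 * e + 2 * d + 1)) (a : Fin 3 →₀ ℕ) :
    P.coeff a ∈ Ideal.span {x, y, z} := by
  have hE : ((X 2 ^ 3) ^ e : MvPolynomial (Fin 3) R).IsHomogeneous (3 * e) :=
    ((MvPolynomial.isHomogeneous_X R 2).pow 3).pow e
  have hD := pow_sub_pow_mem_pow (curveDelta_sub_mem (x := x) (y := y) (z := z))
    (eval_mem_span_triple_pow ((MvPolynomial.isHomogeneous_X R 2).pow 3)) e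
  rw [← map_pow] at hD
  refine hf.coeff_mem_of_mul_eval_mem_pow (span_range_vec_three x y z).symm hE
    (by simp [MvPolynomial.X_ne_zero]) hD (isHomogeneous_curveLeadingForm R) curveMinor_sub_mem
    (fun Q hQ hQ0 ↦ eq_zero_of_bind₁_curveLeadingForm_eq_zero hQ ?_) hP h a
  simpa only [map_curveLeadingForm] using hQ0

theorem coeff_mem_of_sum_mul_curveDelta_pow_mul_prod_mem (hf : IsPermutableRegular ![x, y, z])
    [(Ideal.span {x, y, z}).IsPrime] {d e : ℕ}
    {c : Finset.finsuppAntidiag (.univ : Finset (Fin 3)) d → R}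
    (h : ∑ a, c a * (curveDelta x y z ^ e * ∏ i, curveMinor x y z i ^ a.1 i) ∈
      Ideal.span {x, y, z} ^ (3 * e + 2 * d + 1))
    (a : Finset.finsuppAntidiag (.univ : Finset (Fin 3)) d) : c a ∈ Ideal.span {x, y, z} := by
  let P : MvPolynomial (Fin 3) R := ∑ a, MvPolynomial.monomial a.1 (c a)
  have hP : P.IsHomogeneous d := .sum _ _ _ fun a _ ↦ MvPolynomial.isHomogeneous_monomial _ <| by
    rw [Finsupp.degree_eq_sum]
    exact (Finset.mem_finsuppAntidiag.1 a.2).1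
  have heval : ∑ a, c a * (curveDelta x y z ^ e * ∏ i, curveMinor x y z i ^ a.1 i) =
      curveDelta x y z ^ e * eval (curveMinor x y z) P := by
    simp only [P, map_sum, MvPolynomial.eval_monomial, Finset.mul_sum, mul_left_comm]
    simp [Finsupp.prod_fintype]
  have hcoeff := coeff_mem_of_curveDelta_pow_mul_eval_mem hf hP (heval ▸ h) a.1
  simpa [P, MvPolynomial.coeff_sum, MvPolynomial.coeff_monomial, ← Subtype.ext_iff] using hcoeff

theorem length_deltaFiltration_succ [IsLocalRing R] (hf : IsPermutableRegular ![x, y, z])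
    (hm : maximalIdeal R = Ideal.span {x, y, z}) {n j : ℕ} (hj : 2 * (j + 1) ≤ n) :
    Module.length R (deltaFiltration (curveIdeal x y z) (curveDelta x y z) n (j + 1) ⧸
      Submodule.comap
        (deltaFiltration (curveIdeal x y z) (curveDelta x y z) n (j + 1)).subtype
        (deltaFiltration (curveIdeal x y z) (curveDelta x y z) n j)) =
      ((n - 2 * (j + 1) + 2).choose 2 : ℕ) := by
  have : (Ideal.span {x, y, z}).IsPrime := hm ▸ inferInstance
  set d := n - 2 * (j + 1) with hd
  have hcard : Fintype.card (Finset.finsuppAntidiag (.univ : Finset (Fin 3)) d) =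
      (d + 2).choose 2 := by
    rw [Fintype.card_coe, Finset.card_finsuppAntidiag_nat_eq_choose, Finset.card_fin,
      show 3 + d - 1 = d + 2 by omega, Nat.choose_symm_add]
  have hpow : curveIdeal x y z ^ d =
      Ideal.span (Set.range fun a : Finset.finsuppAntidiag (.univ : Finset (Fin 3)) d ↦
        ∏ i, curveMinor x y z i ^ a.1 i) := by
    rw [← span_range_pow_eq_span_range_prod, span_range_curveMinor]
  rw [← hcard]
  refine length_quotient_comap_eq_card (w := fun a ↦ curveDelta x y z ^ (j + 1) *
    ∏ i, curveMinor x y z i ^ a.1 i) ?_ (fun a t ht ↦ ?_) (fun c hc a ↦ hm ▸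
      coeff_mem_of_sum_mul_curveDelta_pow_mul_prod_mem hf
        (Ideal.pow_le_pow_right (by omega) (deltaFiltration_le_pow (by omega) hc)) a)
  · rw [deltaFiltration_succ, ← hd, hpow, Ideal.span_mul_span', Set.singleton_mul,
      ← Set.range_comp]
    rfl
  · have hprod : ∏ i, curveMinor x y z i ^ a.1 i ∈ curveIdeal x y z ^ d :=
      hpow ▸ Ideal.subset_span ⟨a, rfl⟩
    refine span_pow_mul_le_deltaFiltration le_rfl ?_
    rw [show n - 2 * j = 2 + d by omega, pow_add (curveIdeal x y z)]
    convert! Ideal.mul_mem_mul (Ideal.mem_span_singleton_self (curveDelta x y z ^ j))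
      (Ideal.mul_mem_mul (mul_curveDelta_mem x y z (hm ▸ ht)) hprod) using 1
    ring

theorem length_deltaFiltration [IsLocalRing R] (hf : IsPermutableRegular ![x, y, z])
    (hm : maximalIdeal R = Ideal.span {x, y, z}) {n j : ℕ} (hj : 2 * j ≤ n) :
    Module.length R (deltaFiltration (curveIdeal x y z) (curveDelta x y z) n j ⧸
      Submodule.comap (deltaFiltration (curveIdeal x y z) (curveDelta x y z) n j).subtype
        (curveIdeal x y z ^ n)) =
      (∑ i ∈ Finset.range j, (n - 2 * (i + 1) + 2).choose 2 : ℕ) := by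
  induction j with
  | zero =>
    rw [Finset.sum_range_zero, Nat.cast_zero, Module.length_eq_zero_iff,
      Submodule.Quotient.subsingleton_iff, deltaFiltration_zero]
    exact Submodule.comap_subtype_self _
  | succ j ih =>
    rw [length_quotient_comap_add pow_le_deltaFiltration (deltaFiltration_mono j.le_succ),
      ih (by omega), length_deltaFiltration_succ hf hm hj, Finset.sum_range_succ, Nat.cast_add]

end Curve

section Saturation

variable {R : Type*} [CommRing R]

theorem isSMulRegular_quotient_congr {J : Ideal R} {a b : R} (hab : a - b ∈ J) :
    IsSMulRegular (R ⧸ J) a ↔ IsSMulRegular (R ⧸ J) b := by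
  have : Ideal.Quotient.mk J a = Ideal.Quotient.mk J b := Ideal.Quotient.eq.2 hab
  simp only [IsSMulRegular, Algebra.smul_def, Ideal.Quotient.algebraMap_eq, this]

theorem isSMulRegular_quotient_sup_span_singleton_mul {K J : Ideal R} {x h : R}
    (hx : IsSMulRegular R x) (hh : IsSMulRegular (R ⧸ Ideal.span {x}) h)
    (hJ : IsSMulRegular (R ⧸ J) x)
    (hK : K ⊓ (Ideal.span {x} ⊔ Ideal.span {h}) ≤ Ideal.span {x} * K ⊔ Ideal.span {h} * J) :
    IsSMulRegular (R ⧸ K ⊔ Ideal.span {h} * J) x := by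
  refine (isSMulRegular_quotient_iff_mem_of_smul_mem _ _).2 fun r hr ↦ ?_
  obtain ⟨k, hk, _, hhs, hr⟩ := Submodule.mem_sup.1 hr
  obtain ⟨s, hs, rfl⟩ := Ideal.mem_span_singleton_mul.1 hhs
  rw [smul_eq_mul] at hr
  have hkxh : k ∈ Ideal.span {x} ⊔ Ideal.span {h} :=
    Ideal.mem_span_singleton_sup.2
      ⟨r, -(h * s), neg_mem (Ideal.mem_span_singleton.2 ⟨s, rfl⟩), by linear_combination -hr⟩
  obtain ⟨_, hxk', _, hhs', rfl⟩ := Submodule.mem_sup.1 (hK ⟨hk, hkxh⟩)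
  obtain ⟨k', hk', rfl⟩ := Ideal.mem_span_singleton_mul.1 hxk'
  obtain ⟨s', hs', rfl⟩ := Ideal.mem_span_singleton_mul.1 hhs'
  have hss' : s + s' ∈ Ideal.span {x} := mem_of_isSMulRegular_quotient_of_smul_mem hh
    (Ideal.mem_span_singleton.2 ⟨r - k', by rw [smul_eq_mul]; linear_combination hr⟩)
  obtain ⟨t, ht⟩ := Ideal.mem_span_singleton.1 hss'
  have htJ : t ∈ J := mem_of_isSMulRegular_quotient_of_smul_mem hJ
    (by rw [smul_eq_mul, ← ht]; exact add_mem hs hs')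
  have hrt : r = k' + h * t := hx <| by
    simp only [smul_eq_mul]
    linear_combination -hr + h * ht
  exact hrt ▸ add_mem (Ideal.mem_sup_left hk')
    (Ideal.mem_sup_right (Ideal.mul_mem_mul (Ideal.mem_span_singleton_self h) htJ))

end Saturation

section CurveSaturation

variable {R : Type*} [CommRing R] (x y z : R)

/-- The ideal `Δᵏ` or `Δᵏ (g₁, g₂)` for `n = 2k` or `n = 2k + 1`, consisting of the elements of the
`n`-th symbolic power of the curve which are not contributed by multiples of `g₃ = y² - xz`. -/
def curveSymbolicHead (n : ℕ) : Ideal R :=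
  Ideal.span {curveDelta x y z ^ (n / 2)} *
    Ideal.span {z ^ 2 - x ^ 2 * y, x ^ 3 - y * z} ^ (n % 2)

/-- A recursive description of the symbolic powers of the curve, adapted to division by `x`. -/
def curveSymbolicModel : ℕ → Ideal R
  | 0 => ⊤
  | n + 1 => curveSymbolicHead x y z (n + 1) ⊔ Ideal.span {y ^ 2 - x * z} * curveSymbolicModel n

variable {x y z}

theorem curveSymbolicHead_le_curveSymbolicModel (n : ℕ) :
    curveSymbolicHead x y z n ≤ curveSymbolicModel x y z n := by
  cases n with
  | zero => exact le_top
  | succ n => exact le_sup_left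

theorem span_mul_curveSymbolicModel_le (n : ℕ) :
    Ideal.span {y ^ 2 - x * z} * curveSymbolicModel x y z n ≤ curveSymbolicModel x y z (n + 1) :=
  le_sup_right

theorem curveIdeal_eq_sup : curveIdeal x y z =
    Ideal.span {z ^ 2 - x ^ 2 * y, x ^ 3 - y * z} ⊔ Ideal.span {y ^ 2 - x * z} := by
  rw [← Ideal.span_union, Set.insert_union, Set.singleton_union]

theorem curveSymbolicModel_one : curveSymbolicModel x y z 1 = curveIdeal x y z := by
  simp [curveSymbolicModel, curveSymbolicHead, curveIdeal_eq_sup]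

theorem span_pair_sq_le : Ideal.span {z ^ 2 - x ^ 2 * y, x ^ 3 - y * z} ^ 2 ≤
    Ideal.span {curveDelta x y z} ⊔ Ideal.span {y ^ 2 - x * z} * curveIdeal x y z := by
  have hmem {g r s : R} (hg : g = curveDelta x y z * r + (y ^ 2 - x * z) * s)
      (hs : s ∈ curveIdeal x y z) :
      g ∈ Ideal.span {curveDelta x y z} ⊔ Ideal.span {y ^ 2 - x * z} * curveIdeal x y z :=
    hg ▸ add_mem (Ideal.mem_sup_left (Ideal.mem_span_singleton.2 ⟨r, rfl⟩))
      (Ideal.mem_sup_right (Ideal.mul_mem_mul (Ideal.mem_span_singleton_self _) hs))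
  have h12 : (z ^ 2 - x ^ 2 * y) * (x ^ 3 - y * z) ∈
      Ideal.span {curveDelta x y z} ⊔ Ideal.span {y ^ 2 - x * z} * curveIdeal x y z :=
    hmem (r := -y) (s := x * (y ^ 2 - x * z)) (by rw [curveDelta]; ring)
      (Ideal.mul_mem_left _ _ (curveMinor_mem_curveIdeal x y z 2))
  rw [pow_two, Ideal.span_mul_span', Ideal.span_le]
  rintro _ ⟨_, rfl | rfl, _, rfl | rfl, rfl⟩
  · exact hmem (r := z) (s := x * (x ^ 3 - y * z)) (by simp only [curveDelta]; ring)
      (Ideal.mul_mem_left _ _ (curveMinor_mem_curveIdeal x y z 1))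
  · exact h12
  · rw [mul_comm (z ^ 2 - x ^ 2 * y)] at h12
    exact h12
  · exact hmem (r := x) (s := z ^ 2 - x ^ 2 * y) (by simp only [curveDelta]; ring)
      (curveMinor_mem_curveIdeal x y z 0)

theorem span_curveDelta_pow_mul_curveIdeal_le (k : ℕ) :
    Ideal.span {curveDelta x y z ^ k} * curveIdeal x y z ≤
      curveSymbolicModel x y z (2 * k + 1) := by
  have hodd : curveSymbolicHead x y z (2 * k + 1) = Ideal.span {curveDelta x y z ^ k} *
      Ideal.span {z ^ 2 - x ^ 2 * y, x ^ 3 - y * z} := by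
    rw [curveSymbolicHead, show (2 * k + 1) / 2 = k by omega, show (2 * k + 1) % 2 = 1 by omega,
      pow_one]
  have heven : curveSymbolicHead x y z (2 * k) = Ideal.span {curveDelta x y z ^ k} := by
    simp [curveSymbolicHead]
  rw [curveIdeal_eq_sup, Ideal.mul_sup, curveSymbolicModel, hodd, mul_comm _ (Ideal.span {_ - _}),
    ← heven]
  exact sup_le_sup_left (Ideal.mul_mono_right (curveSymbolicHead_le_curveSymbolicModel _)) _

theorem curveIdeal_mul_curveSymbolicHead_le (n : ℕ) :
    curveIdeal x y z * curveSymbolicHead x y z n ≤ curveSymbolicModel x y z (n + 1) := by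
  obtain ⟨k, rfl | rfl⟩ := n.even_or_odd'
  · rw [mul_comm]
    simpa [curveSymbolicHead] using span_curveDelta_pow_mul_curveIdeal_le k
  · have hsucc : Ideal.span {curveDelta x y z ^ (k + 1)} ≤
        curveSymbolicModel x y z (2 * k + 1 + 1) := by
      simpa [curveSymbolicHead, mul_add_one] using
        curveSymbolicHead_le_curveSymbolicModel (x := x) (y := y) (z := z) (2 * (k + 1))
    rw [curveIdeal_eq_sup, Ideal.sup_mul]
    refine sup_le ?_ ((Ideal.mul_mono_right (curveSymbolicHead_le_curveSymbolicModel _)).trans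
      (span_mul_curveSymbolicModel_le _))
    calc Ideal.span {z ^ 2 - x ^ 2 * y, x ^ 3 - y * z} * curveSymbolicHead x y z (2 * k + 1)
        = Ideal.span {curveDelta x y z ^ k} *
            Ideal.span {z ^ 2 - x ^ 2 * y, x ^ 3 - y * z} ^ 2 := by
          rw [curveSymbolicHead, show (2 * k + 1) / 2 = k by omega,
            show (2 * k + 1) % 2 = 1 by omega]
          ring
      _ ≤ Ideal.span {curveDelta x y z ^ k} *
            (Ideal.span {curveDelta x y z} ⊔ Ideal.span {y ^ 2 - x * z} * curveIdeal x y z) :=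
          Ideal.mul_mono_right span_pair_sq_le
      _ = Ideal.span {curveDelta x y z ^ (k + 1)} ⊔ Ideal.span {y ^ 2 - x * z} *
            (Ideal.span {curveDelta x y z ^ k} * curveIdeal x y z) := by
          rw [Ideal.mul_sup, Ideal.span_singleton_mul_span_singleton, ← pow_succ, mul_left_comm]
      _ ≤ curveSymbolicModel x y z (2 * k + 1 + 1) :=
          sup_le hsucc ((Ideal.mul_mono_right (span_curveDelta_pow_mul_curveIdeal_le k)).trans
            (span_mul_curveSymbolicModel_le _))

theorem curveIdeal_mul_curveSymbolicModel_le (n : ℕ) :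
    curveIdeal x y z * curveSymbolicModel x y z n ≤ curveSymbolicModel x y z (n + 1) := by
  induction n with
  | zero => exact Ideal.mul_le_left.trans_eq curveSymbolicModel_one.symm
  | succ n ih =>
    rw [curveSymbolicModel, Ideal.mul_sup, mul_left_comm]
    exact sup_le (curveIdeal_mul_curveSymbolicHead_le _)
      ((Ideal.mul_mono_right ih).trans (span_mul_curveSymbolicModel_le _))

theorem curveIdeal_pow_le_curveSymbolicModel (n : ℕ) :
    curveIdeal x y z ^ n ≤ curveSymbolicModel x y z n := by
  induction n with
  | zero => exact le_top
  | succ n ih =>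
    rw [pow_succ']
    exact (Ideal.mul_mono_right ih).trans (curveIdeal_mul_curveSymbolicModel_le n)

theorem curveSymbolicModel_le_deltaFiltration (n : ℕ) : curveSymbolicModel x y z n ≤
    deltaFiltration (curveIdeal x y z) (curveDelta x y z) n (n / 2) := by
  induction n with
  | zero => simp [deltaFiltration_zero]
  | succ n ih =>
    refine sup_le ?_ ?_
    · rw [curveSymbolicHead, ← show n + 1 - 2 * ((n + 1) / 2) = (n + 1) % 2 by omega]
      exact (Ideal.mul_mono_right (Ideal.pow_right_mono
        (le_sup_left.trans_eq curveIdeal_eq_sup.symm) _)).trans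
          (span_pow_mul_le_deltaFiltration le_rfl)
    · calc Ideal.span {y ^ 2 - x * z} * curveSymbolicModel x y z n
          ≤ curveIdeal x y z * deltaFiltration (curveIdeal x y z) (curveDelta x y z) n (n / 2) :=
            Ideal.mul_mono (le_sup_right.trans_eq curveIdeal_eq_sup.symm) ih
        _ ≤ deltaFiltration (curveIdeal x y z) (curveDelta x y z) (n + 1) (n / 2) :=
            mul_deltaFiltration_le (Nat.mul_div_le n 2)
        _ ≤ deltaFiltration (curveIdeal x y z) (curveDelta x y z) (n + 1) ((n + 1) / 2) :=
            deltaFiltration_mono (by omega)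

theorem pow_mul_mem_pow_of_mem_deltaFiltration {n j : ℕ} (hj : 2 * j ≤ n) {r : R}
    (hr : r ∈ deltaFiltration (curveIdeal x y z) (curveDelta x y z) n j) :
    x ^ j * r ∈ curveIdeal x y z ^ n := by
  suffices h : deltaFiltration (curveIdeal x y z) (curveDelta x y z) n j ≤
      Submodule.colon (curveIdeal x y z ^ n) {x ^ j} by
    simpa [Submodule.mem_colon_singleton, mul_comm (x ^ j)] using h hr
  refine deltaFiltration_le_iff.2 fun i hi ↦ Ideal.span_singleton_mul_le_iff.2 fun s hs ↦ ?_
  rw [Submodule.mem_colon_singleton, smul_eq_mul]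
  have hΔ := Ideal.mul_mem_mul (Ideal.pow_mem_pow (mul_curveDelta_mem x y z
    (Ideal.subset_span (by simp) : x ∈ _)) i) hs
  rw [← pow_mul, ← pow_add, show 2 * i + (n - 2 * i) = n by omega] at hΔ
  convert! Ideal.mul_mem_left _ (x ^ (j - i)) hΔ using 1
  rw [← pow_sub_mul_pow x hi]
  ring

theorem span_sup_span_sq_sub_mul : Ideal.span {x} ⊔ Ideal.span {y ^ 2 - x * z} =
    Ideal.span {y ^ 2} ⊔ Ideal.span {x} := by
  rw [sup_comm]
  refine le_antisymm (sup_le ?_ le_sup_right) (sup_le ?_ le_sup_right) <;>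
    rw [Ideal.span_singleton_le_iff_mem, Ideal.mem_span_singleton_sup]
  · exact ⟨1, -(x * z), Ideal.mem_span_singleton.2 ⟨-z, by ring⟩, by ring⟩
  · exact ⟨1, x * z, Ideal.mem_span_singleton.2 ⟨z, rfl⟩, by ring⟩

theorem isSMulRegular_quotient_curveDelta (hy : IsSMulRegular (R ⧸ Ideal.span {x}) y)
    (hz : IsSMulRegular (R ⧸ Ideal.span {y} ⊔ Ideal.span {x}) z) :
    IsSMulRegular (R ⧸ Ideal.span {y ^ 2} ⊔ Ideal.span {x}) (curveDelta x y z) := by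
  refine (isSMulRegular_quotient_congr (b := z ^ 3) (Ideal.mem_sup_right
    (Ideal.mem_span_singleton.2 ⟨y ^ 3 - 3 * x * y * z + x ^ 4, ?_⟩))).2
    ((isSMulRegular_quotient_span_pow_sup hz hy 2).pow 3)
  rw [curveDelta]
  ring

theorem span_pair_inf_le (hy : IsSMulRegular (R ⧸ Ideal.span {x}) y)
    (hz : IsSMulRegular (R ⧸ Ideal.span {y} ⊔ Ideal.span {x}) z) :
    Ideal.span {z ^ 2 - x ^ 2 * y, x ^ 3 - y * z} ⊓ (Ideal.span {y ^ 2} ⊔ Ideal.span {x}) ≤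
      Ideal.span {x} * Ideal.span {z ^ 2 - x ^ 2 * y, x ^ 3 - y * z} ⊔
        Ideal.span {y ^ 2 - x * z} := by
  rintro r ⟨hr, hr'⟩
  obtain ⟨a, b, rfl⟩ := Ideal.mem_span_pair.1 hr
  have hab : a * z - b * y ∈ Ideal.span {y ^ 2} ⊔ Ideal.span {x} := by
    refine mem_of_isSMulRegular_quotient_of_smul_mem
      (isSMulRegular_quotient_span_pow_sup hz hy 2) ?_
    convert! add_mem hr' (Ideal.mem_sup_right (Ideal.mem_span_singleton.2
      ⟨a * x * y - b * x ^ 2, rfl⟩)) using 1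
    rw [smul_eq_mul]
    ring
  obtain ⟨v, _, hu, huv⟩ := Ideal.mem_span_singleton_sup.1 hab
  obtain ⟨u, rfl⟩ := Ideal.mem_span_singleton.1 hu
  have ha : a ∈ Ideal.span {y} ⊔ Ideal.span {x} :=
    mem_of_isSMulRegular_quotient_of_smul_mem hz (Ideal.mem_span_singleton_sup.2
      ⟨v * y + b, _, hu, by rw [smul_eq_mul]; linear_combination huv⟩)
  obtain ⟨a₁, _, ha₀, rfl⟩ := Ideal.mem_span_singleton_sup.1 ha
  obtain ⟨a₀, rfl⟩ := Ideal.mem_span_singleton.1 ha₀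
  have hb : a₁ * z - b - v * y ∈ Ideal.span {x} :=
    mem_of_isSMulRegular_quotient_of_smul_mem hy (Ideal.mem_span_singleton.2
      ⟨u - a₀ * z, by rw [smul_eq_mul]; linear_combination -huv⟩)
  obtain ⟨w, hw⟩ := Ideal.mem_span_singleton.1 hb
  obtain rfl : b = a₁ * z - v * y - x * w := by linear_combination -hw
  refine Submodule.mem_sup.2 ⟨_, Ideal.mul_mem_mul (Ideal.mem_span_singleton_self x)
    (Ideal.mem_span_pair.2 ⟨a₀ + v, -w, rfl⟩), _,
    Ideal.mem_span_singleton.2 ⟨v * z - a₁ * x ^ 2, rfl⟩, ?_⟩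
  ring

theorem curveDelta_pow_mem_curveSymbolicModel (n : ℕ) :
    curveDelta x y z ^ ((n + 1) / 2) ∈ curveSymbolicModel x y z n := by
  obtain ⟨k, rfl | rfl⟩ := n.even_or_odd'
  · refine curveSymbolicHead_le_curveSymbolicModel _ ?_
    simp [curveSymbolicHead, show (2 * k + 1) / 2 = k by omega]
  · have hΔ : curveDelta x y z ∈ curveIdeal x y z := Submodule.mem_span_triple.2
      ⟨z, x ^ 2, x * y, by simp only [curveDelta, smul_eq_mul]; ring⟩
    rw [show (2 * k + 1 + 1) / 2 = k + 1 by omega, pow_succ]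
    exact span_curveDelta_pow_mul_curveIdeal_le k
      (Ideal.mul_mem_mul (Ideal.mem_span_singleton_self _) hΔ)

theorem curveSymbolicHead_inf_le (hy : IsSMulRegular (R ⧸ Ideal.span {x}) y)
    (hz : IsSMulRegular (R ⧸ Ideal.span {y} ⊔ Ideal.span {x}) z) (n : ℕ) :
    curveSymbolicHead x y z (n + 1) ⊓ (Ideal.span {y ^ 2} ⊔ Ideal.span {x}) ≤
      Ideal.span {x} * curveSymbolicHead x y z (n + 1) ⊔
        Ideal.span {y ^ 2 - x * z} * curveSymbolicModel x y z n := by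
  have hL : Ideal.span {z ^ 2 - x ^ 2 * y, x ^ 3 - y * z} ^ ((n + 1) % 2) ⊓
      (Ideal.span {y ^ 2} ⊔ Ideal.span {x}) ≤
        Ideal.span {x} * Ideal.span {z ^ 2 - x ^ 2 * y, x ^ 3 - y * z} ^ ((n + 1) % 2) ⊔
          Ideal.span {y ^ 2 - x * z} := by
    rcases Nat.mod_two_eq_zero_or_one (n + 1) with h | h <;> rw [h]
    · simp [← span_sup_span_sq_sub_mul (z := z)]
    · simpa using span_pair_inf_le hy hz
  rintro _ ⟨hr, hr'⟩
  obtain ⟨l, hl, rfl⟩ := Ideal.mem_span_singleton_mul.1 hr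
  have hl' := mem_of_isSMulRegular_quotient_of_smul_mem
    ((isSMulRegular_quotient_curveDelta hy hz).pow ((n + 1) / 2)) hr'
  obtain ⟨_, hl₁, _, hl₂, rfl⟩ := Submodule.mem_sup.1 (hL ⟨hl, hl'⟩)
  rw [mul_add]
  refine Submodule.add_mem_sup ?_ ?_
  · rw [curveSymbolicHead, mul_left_comm]
    exact Ideal.mul_mem_mul (Ideal.mem_span_singleton_self _) hl₁
  · rw [mul_comm (curveDelta x y z ^ _)]
    exact Ideal.mul_mem_mul hl₂ (curveDelta_pow_mem_curveSymbolicModel n)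

theorem isSMulRegular_quotient_curveSymbolicModel (hx : IsSMulRegular R x)
    (hy : IsSMulRegular (R ⧸ Ideal.span {x}) y)
    (hz : IsSMulRegular (R ⧸ Ideal.span {y} ⊔ Ideal.span {x}) z) (n : ℕ) :
    IsSMulRegular (R ⧸ curveSymbolicModel x y z n) x := by
  induction n with
  | zero => exact (isSMulRegular_quotient_iff_mem_of_smul_mem _ _).2 fun _ _ ↦ Submodule.mem_top
  | succ n ih =>
    have hg : IsSMulRegular (R ⧸ Ideal.span {x}) (y ^ 2 - x * z) :=
      (isSMulRegular_quotient_congr (b := y ^ 2)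
        (Ideal.mem_span_singleton.2 ⟨-z, by ring⟩)).2 (hy.pow 2)
    refine isSMulRegular_quotient_sup_span_singleton_mul hx hg ih ?_
    rw [span_sup_span_sq_sub_mul]
    exact curveSymbolicHead_inf_le hy hz n

end CurveSaturation

section SymbolicPower

variable {R : Type*} [CommRing R] {I : Ideal R}

theorem mem_symbolicPower_iff {n : ℕ} {r : R} :
    r ∈ symbolicPower I n ↔ ∀ p ∈ I.minimalPrimes, ∃ s ∉ p, s * r ∈ I ^ n := by
  simp only [symbolicPower, Submodule.mem_iInf, Subtype.forall, Ideal.mem_comap]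
  refine forall₂_congr fun p hp ↦ ?_
  have : p.IsPrime := hp.1.1
  exact IsLocalization.algebraMap_mem_map_algebraMap_iff p.primeCompl _ _ _

theorem mem_symbolicPower_iff_exists_pow_mul_mem {x : R}
    (hx : ∀ p : Ideal R, p.IsPrime → I ≤ p → (p ∈ I.minimalPrimes ↔ x ∉ p)) {n : ℕ} {r : R} :
    r ∈ symbolicPower I n ↔ ∃ k, x ^ k * r ∈ I ^ n := by
  rw [mem_symbolicPower_iff]
  constructor
  · intro hr
    suffices hrad : x ∈ (Submodule.colon (I ^ n) {r}).radical by
      obtain ⟨k, hk⟩ := hrad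
      exact ⟨k, Submodule.mem_colon_singleton.1 hk⟩
    rw [Ideal.radical_eq_sInf, Submodule.mem_sInf]
    rintro q ⟨hq, hqp⟩
    by_contra hxq
    have hIq : I ≤ q := hqp.le_of_pow_le (n := n) fun s hs ↦
      hq (Submodule.mem_colon_singleton.2 (Ideal.mul_mem_right _ _ hs))
    obtain ⟨s, hs, hsr⟩ := hr q ((hx q hqp hIq).2 hxq)
    exact hs (hq (Submodule.mem_colon_singleton.2 hsr))
  · rintro ⟨k, hk⟩ p hp
    exact ⟨x ^ k, fun h ↦ (hx p hp.1.1 hp.1.2).1 hp (hp.1.1.mem_of_pow_mem _ h), hk⟩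

theorem notMem_of_isSMulRegular_quotient {x : R} (hx : IsSMulRegular (R ⧸ I) x) {p : Ideal R}
    (hp : p ∈ I.minimalPrimes) : x ∉ p := by
  intro hxp
  obtain ⟨s, hs, hxs⟩ := Ideal.exists_mul_mem_of_mem_minimalPrimes hp hxp
  exact hs (mem_of_isSMulRegular_quotient_of_smul_mem hx hxs)

theorem mem_minimalPrimes_of_lt [IsNoetherianRing R] {p q : Ideal R} {x : R}
    (hp : p ∈ (I ⊔ Ideal.span {x}).minimalPrimes) [hq : q.IsPrime] (hIq : I ≤ q) (hqp : q < p) :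
    q ∈ I.minimalPrimes := by
  have hprime {r : Ideal R} (hr : r.IsPrime) (hIr : I ≤ r) :
      (r.map (Ideal.Quotient.mk I)).IsPrime :=
    Ideal.map_isPrime_of_surjective Ideal.Quotient.mk_surjective (by rwa [Ideal.mk_ker])
  have hqI := hprime hq hIq
  have hpI := hprime hp.1.1 (hIq.trans hqp.le)
  have hlt : q.map (Ideal.Quotient.mk I) < p.map (Ideal.Quotient.mk I) := by
    refine lt_of_le_of_ne (Ideal.map_mono hqp.le) fun h ↦ hqp.ne ?_
    rw [← Ideal.comap_map_mk hIq, h, Ideal.comap_map_mk (hIq.trans hqp.le)]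
  have hheight := (Ideal.height_add_one_le_of_lt_of_isPrime hlt).trans
    (Ideal.map_height_le_one_of_mem_minimalPrimes hp)
  have hzero : (q.map (Ideal.Quotient.mk I)).height = 0 := by
    rw [← nonpos_iff_eq_zero]
    exact (WithTop.add_le_add_iff_right ENat.one_ne_top).1 (hheight.trans_eq (zero_add 1).symm)
  rw [Ideal.minimalPrimes_eq_comap]
  exact ⟨_, Ideal.height_eq_zero_iff.1 hzero, Ideal.comap_map_mk hIq⟩

variable {x y z : R}

theorem span_mem_minimalPrimes_curveIdeal_sup [hm : (Ideal.span {x, y, z}).IsPrime] :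
    Ideal.span {x, y, z} ∈ (curveIdeal x y z ⊔ Ideal.span {x}).minimalPrimes := by
  refine ⟨⟨hm, sup_le (curveIdeal_le_sq.trans (Ideal.pow_le_self two_ne_zero))
    (Ideal.span_mono (by simp))⟩, fun q ⟨hq, hle⟩ _ ↦ ?_⟩
  have hxq : x ∈ q := hle (Ideal.mem_sup_right (Ideal.mem_span_singleton_self x))
  have hg (k) : curveMinor x y z k ∈ q :=
    hle (Ideal.mem_sup_left (curveMinor_mem_curveIdeal x y z k))
  rw [Ideal.span_le]
  rintro _ (rfl | rfl | rfl)
  · exact hxq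
  · exact hq.mem_of_pow_mem 2 ((Submodule.sub_mem_iff_left _
      (Ideal.mul_mem_right _ _ hxq)).1 (hg 2))
  · exact hq.mem_of_pow_mem 2 ((Submodule.sub_mem_iff_left _
      (Ideal.mul_mem_right _ _ (Ideal.pow_mem_of_mem _ hxq 2 two_pos))).1 (hg 0))

theorem symbolicPower_curveIdeal [IsNoetherianRing R] [IsLocalRing R]
    (hf : IsPermutableRegular ![x, y, z]) (hm : maximalIdeal R = Ideal.span {x, y, z}) (n : ℕ) :
    symbolicPower (curveIdeal x y z) n =
      deltaFiltration (curveIdeal x y z) (curveDelta x y z) n (n / 2) := by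
  have hxreg : IsSMulRegular R x := hf.isSMulRegular 0
  have hyreg : IsSMulRegular (R ⧸ Ideal.span {x}) y := by
    have := hf {0} 1 (by simp)
    rwa [Finset.coe_singleton, Set.image_singleton] at this
  have hzreg : IsSMulRegular (R ⧸ Ideal.span {y} ⊔ Ideal.span {x}) z := by
    rw [← Ideal.span_insert]
    have := hf {1, 0} 2 (by decide)
    rwa [Finset.coe_insert, Finset.coe_singleton, Set.image_pair] at this
  have hsat := isSMulRegular_quotient_curveSymbolicModel hxreg hyreg hzreg
  have : (Ideal.span {x, y, z}).IsPrime := hm ▸ inferInstance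
  have hmin (p : Ideal R) (hp : p.IsPrime) (hIp : curveIdeal x y z ≤ p) :
      p ∈ (curveIdeal x y z).minimalPrimes ↔ x ∉ p := by
    refine ⟨notMem_of_isSMulRegular_quotient (curveSymbolicModel_one (x := x) ▸ hsat 1),
      fun hxp ↦ mem_minimalPrimes_of_lt span_mem_minimalPrimes_curveIdeal_sup hIp ?_⟩
    rw [← hm]
    exact (le_maximalIdeal hp.ne_top).lt_of_ne fun h ↦ hxp (h ▸ hm ▸ Ideal.subset_span (by simp))
  ext r
  rw [mem_symbolicPower_iff_exists_pow_mul_mem hmin]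
  refine ⟨fun ⟨k, hk⟩ ↦ curveSymbolicModel_le_deltaFiltration n ?_,
    fun hr ↦ ⟨_, pow_mul_mem_pow_of_mem_deltaFiltration (Nat.mul_div_le n 2) hr⟩⟩
  exact mem_of_isSMulRegular_quotient_of_smul_mem ((hsat n).pow k)
    (curveIdeal_pow_le_curveSymbolicModel n hk)

end SymbolicPower

section Asymptotics

theorem twentyFour_mul_sum_choose_two (n : ℕ) :
    24 * ∑ i ∈ Finset.range (n / 2), (n - 2 * (i + 1) + 2).choose 2 + 2 * n + 3 * (n % 2) =
      2 * n ^ 3 + 3 * n ^ 2 := by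
  induction n using Nat.twoStepInduction with
  | zero => simp
  | one => simp
  | more n ih _ =>
    have hchoose : 2 * (n + 2).choose 2 = (n + 2) * (n + 1) := by
      rw [Nat.choose_two_right, Nat.mul_div_cancel' (Nat.even_mul_pred_self (n + 2)).two_dvd]
      rfl
    have hsum : ∑ i ∈ Finset.range ((n + 2) / 2), (n + 2 - 2 * (i + 1) + 2).choose 2 =
        ∑ i ∈ Finset.range (n / 2), (n - 2 * (i + 1) + 2).choose 2 + (n + 2).choose 2 := by
      rw [show (n + 2) / 2 = n / 2 + 1 by omega, Finset.sum_range_succ']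
      congr 1
      refine Finset.sum_congr rfl fun i _ ↦ ?_
      rw [show n + 2 - 2 * (i + 1 + 1) = n - 2 * (i + 1) by omega]
    rw [hsum, Nat.add_mod_right]
    linear_combination ih + 12 * hchoose

theorem tendsto_const_add_const_mul_inv_natCast (a c : ℝ) :
    Tendsto (fun n : ℕ ↦ a + c * (n : ℝ)⁻¹) atTop (nhds a) := by
  simpa using ((tendsto_inv_atTop_nhds_zero_nat (𝕜 := ℝ)).const_mul c).const_add a

theorem tendsto_six_div_pow_mul {L : ℕ → ℕ}
    (hL : ∀ n, 2 * n ^ 3 + 3 * n ^ 2 ≤ 24 * L n + 2 * n + 3 ∧ 24 * L n ≤ 2 * n ^ 3 + 3 * n ^ 2) :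
    Tendsto (fun n : ℕ ↦ (6 : ℝ) / (n : ℝ) ^ 3 * (L n : ℝ)) atTop (nhds (1 / 2)) := by
  refine tendsto_of_tendsto_of_tendsto_of_le_of_le'
    (tendsto_const_add_const_mul_inv_natCast (1 / 2) (-2))
    (tendsto_const_add_const_mul_inv_natCast (1 / 2) (3 / 4)) ?_ ?_ <;>
    filter_upwards [eventually_ge_atTop 1] with n hn <;>
    have hn₁ : (1 : ℝ) ≤ n := by exact_mod_cast hn
  · have hlower : (2 * n ^ 3 + 3 * n ^ 2 : ℝ) ≤ 24 * L n + 2 * n + 3 := by exact_mod_cast (hL n).1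
    calc (1 / 2 + -2 * (n : ℝ)⁻¹) = (n ^ 3 / 2 - 2 * n ^ 2) / n ^ 3 := by field
      _ ≤ 6 * L n / n ^ 3 := by gcongr; nlinarith
      _ = 6 / n ^ 3 * L n := by ring
  · have hupper : (24 * L n : ℝ) ≤ 2 * n ^ 3 + 3 * n ^ 2 := by exact_mod_cast (hL n).2
    calc (6 / n ^ 3 * L n : ℝ) = 6 * L n / n ^ 3 := by ring
      _ ≤ (n ^ 3 / 2 + 3 / 4 * n ^ 2) / n ^ 3 := by gcongr; linarith
      _ = 1 / 2 + 3 / 4 * (n : ℝ)⁻¹ := by field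

end Asymptotics

/-- Let `R` be a 3-dimensional regular local ring with `m = (x, y, z)` and
`I = (z² - x²y, x³ - yz, y² - xz)`.  The ε-multiplicity
`ε(I) = lim_n (3!/n³)·length(I⁽ⁿ⁾/Iⁿ)` exists and equals `1/2`. -/
theorem epsilon_multiplicity_eq_half
    {R : Type*} [CommRing R] [IsNoetherianRing R] [IsLocalRing R]
    (hdim : ringKrullDim R = 3)
    (x y z : R) (hreg : maximalIdeal R = Ideal.span {x, y, z})
    (I : Ideal R)
    (hI : I = Ideal.span {z ^ 2 - x ^ 2 * y, x ^ 3 - y * z, y ^ 2 - x * z}) :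
    ∃ L : ℕ → ℕ,
      (∀ n : ℕ, 1 ≤ n →
        HasLength R
          (↥(symbolicPower I n) ⧸
            Submodule.comap (symbolicPower I n).subtype ((I ^ n : Ideal R) : Submodule R R))
          (L n)) ∧
      Tendsto (fun n : ℕ => (6 : ℝ) / (n : ℝ) ^ 3 * (L n : ℝ)) atTop (nhds (1 / 2)) := by
  refine ⟨fun n ↦ ∑ i ∈ Finset.range (n / 2), (n - 2 * (i + 1) + 2).choose 2, fun n _ ↦ ?_,
    tendsto_six_div_pow_mul fun n ↦ by grind [twentyFour_mul_sum_choose_two n]⟩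
  obtain rfl : I = curveIdeal x y z := hI
  have hf : IsPermutableRegular ![x, y, z] := isPermutableRegular_of_span_eq_maximalIdeal
    ((span_range_vec_three x y z).trans hreg.symm) (by simp [hdim])
  rw [symbolicPower_curveIdeal hf hreg]
  exact hasLength_of_length_eq (length_deltaFiltration hf hreg (Nat.mul_div_le n 2))
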